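/- Let k ≥ 6 be an integer and let α, β ∈ {0,1,…,k}. There exists a k-L(2,1)-labelling L of the gadget G_k with L(u) = k, L(v) = 0, L(a_u) = α and L(a_v) = β if and only if (α,β) = (1, k−1). -/

import Mathlib

/-- For an integer `k`, a `k`-L(2,1)-labelling of a graph `G` is a map from the vertices
to `{0,1,…,k}` such that labels of adjacent vertices differ by at least `2` and vertices
at distance exactly `2` get distinct labels. -/
def IsL21Labelling {V : Type*} (G : SimpleGraph V) (k : ℕ) (L : V → ℕ) : Prop :=
  (∀ v, L v ≤ k) ∧
  (∀ x y, G.Adj x y → 2 ≤ |(L x : ℤ) - (L y : ℤ)|) ∧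
  (∀ x y, G.dist x y = 2 → L x ≠ L y)

/-- The vertices of the graph `H'` for a given `k`:
`c, d, e, f₁, …, f_{k-3}, g, h, i`. -/
inductive HpV (k : ℕ) | c | d | e | f (j : Fin (k - 3)) | g | h | i
deriving DecidableEq

/-- The adjacency generating relation of `H'`: edges `cd`, `de`, `gh`, `gi`,
and `d fⱼ`, `g fⱼ` for every `j`. -/
def HpAdj (k : ℕ) : HpV k → HpV k → Prop := fun x y =>
  (x = HpV.c ∧ y = HpV.d) ∨ (x = HpV.d ∧ y = HpV.e) ∨
  (x = HpV.g ∧ y = HpV.h) ∨ (x = HpV.g ∧ y = HpV.i) ∨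
  (∃ j, (x = HpV.d ∧ y = HpV.f j) ∨ (x = HpV.g ∧ y = HpV.f j))

/-- The vertices of the gadget `G_k` (for `k ≥ 6`): the path `u, a_u, a_v, v`,
the vertices `b₁, …, b_{k-5}`, and for each `i` two copies (indexed by `Bool`)
of the graph `H'`. -/
inductive GkV (k : ℕ)
| u | au | av | v
| b (i : Fin (k - 5))
| hp (i : Fin (k - 5)) (s : Bool) (x : HpV k)

/-- The adjacency generating relation of the gadget `G_k` (for `k ≥ 6`):
the path `u a_u`, `a_u a_v`, `a_v v`; each `bᵢ` joined to `a_u` and `a_v`;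
the vertex `c` of each of the two copies of `H'` at `bᵢ` joined to `bᵢ`;
and the edges of `H'` inside each copy. -/
def GkAdj (k : ℕ) : GkV k → GkV k → Prop := fun x y =>
  (x = GkV.u ∧ y = GkV.au) ∨ (x = GkV.au ∧ y = GkV.av) ∨ (x = GkV.av ∧ y = GkV.v) ∨
  (∃ i, (x = GkV.au ∧ y = GkV.b i) ∨ (x = GkV.av ∧ y = GkV.b i)) ∨
  (∃ i s, x = GkV.b i ∧ y = GkV.hp i s HpV.c) ∨
  (∃ i s x' y', x = GkV.hp i s x' ∧ y = GkV.hp i s y' ∧ HpAdj k x' y')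

/-- The gadget `G_k` (for `k ≥ 6`). -/
def Gk (k : ℕ) : SimpleGraph (GkV k) := SimpleGraph.fromRel (GkAdj k)

/-!
The labels `1, …, k - 1` are best arranged in a cycle, that is, read in `ZMod (k - 1)`.

A vertex with at least `k - 1` neighbours can only be labelled `0` or `k`. In a copy of `H'` this
applies to `d` and `g`, so the `fⱼ` use up all of `2, …, k - 2` and `c` gets one of
`0, 1, k - 1, k`. Hence if `bᵢ` is labelled `1`, its two neighbours named `c` use up `k - 1` and
`k`, and symmetrically if it is labelled `k - 1`, they use up `0` and `1`. So besides not being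
equal or consecutive, the labels of `bᵢ` and of `a_u` cannot be `1` and `k - 1` in either order:
they are not equal or consecutive in the cycle. The same holds for `a_v`.

The `k - 5` distinct labels of the `bᵢ` therefore leave at most four of the `k - 1` points of the
cycle to the arcs of length three around `α` and `β`. But these arcs cover at least five points
unless `α` and `β` are equal or consecutive in the cycle, and as `|α - β| ≥ 2` this leaves only
`{α, β} = {1, k - 1}`.
-/

/-- The arc of length three centred at `a`; for `R = ZMod n`, the points of the `n`-cycle which are
equal or adjacent to `a`. -/
def arc {R : Type*} [AddGroupWithOne R] [DecidableEq R] (a : R) : Finset R :=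
  {a - 1, a, a + 1}

theorem five_le_card_union_arc {R : Type*} [CommRing R] [DecidableEq R] (h4 : (4 : R) ≠ 0)
    {a b : R} (h : b ∉ arc a) : 5 ≤ (arc a ∪ arc b).card := by
  have h2 : (2 : R) ≠ 0 := fun h2 ↦ h4 (by linear_combination 2 * h2)
  have h_pred : a - 1 ≠ a := fun h_eq ↦ h4 (by linear_combination -4 * h_eq)
  have h_ends : a - 1 ≠ a + 1 := fun h_eq ↦ h2 (by linear_combination -h_eq)
  simp only [arc, Finset.mem_insert, Finset.mem_singleton, not_or] at h
  -- The arcs cannot overlap at both ends: `b + 1 = a - 1` and `b - 1 = a + 1` would give `4 = 0`.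
  by_cases hb : b + 1 = a - 1
  · calc 5 = ({a - 1, a, a + 1, b, b - 1} : Finset R).card := by grind
      _ ≤ _ := Finset.card_le_card (by grind [arc])
  · calc 5 = ({a - 1, a, a + 1, b, b + 1} : Finset R).card := by grind
      _ ≤ _ := Finset.card_le_card (by grind [arc])

theorem injOn_natCast_zmod_Icc (n : ℕ) :
    Set.InjOn (Nat.cast : ℕ → ZMod n) (Set.Icc 1 n) := by
  intro x hx y hy hxy
  rw [ZMod.natCast_eq_natCast_iff] at hxy
  simp only [Set.mem_Icc] at hx hy
  exact hxy.eq_of_abs_lt (by rw [abs_lt]; omega)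

theorem natCast_mem_arc_natCast_iff {n x y : ℕ} (hx : x ∈ Set.Icc 1 n) (hy : y ∈ Set.Icc 1 n) :
    (x : ZMod n) ∈ arc (y : ZMod n) ↔
      (x ≤ y + 1 ∧ y ≤ x + 1) ∨ (x = 1 ∧ y = n) ∨ (x = n ∧ y = 1) := by
  rw [Set.mem_Icc] at hx hy
  have cast_eq_iff (z : ℤ) : (x : ZMod n) = (z : ZMod n) ↔ (n : ℤ) ∣ z - x := by
    rw [← ZMod.intCast_eq_intCast_iff_dvd_sub, Int.cast_natCast]
  have dvd_iff (z : ℤ) (hz : |z| ≤ n) : (n : ℤ) ∣ z ↔ z = 0 ∨ z = n ∨ z = -n := by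
    refine ⟨fun h ↦ ?_, by rintro (rfl | rfl | rfl) <;> simp⟩
    obtain hlt | heq := hz.lt_or_eq
    · exact .inl (Int.eq_zero_of_abs_lt_dvd h hlt)
    · exact .inr ((abs_eq (by omega)).1 heq)
  have h_pred := cast_eq_iff (y - 1)
  have h_self := cast_eq_iff y
  have h_succ := cast_eq_iff (y + 1)
  rw [dvd_iff _ (by rw [abs_le]; omega)] at h_pred h_self h_succ
  push_cast at h_pred h_self h_succ
  simp only [arc, Finset.mem_insert, Finset.mem_singleton, h_pred, h_self, h_succ]
  omega

theorem four_ne_zero_zmod {n : ℕ} (hn : 5 ≤ n) : (4 : ZMod n) ≠ 0 := by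
  intro h
  have := Nat.le_of_dvd four_pos ((ZMod.natCast_eq_zero_iff 4 n).1 h)
  omega

theorem dist_eq_two_iff {V : Type*} {G : SimpleGraph V} {x y : V} :
    G.dist x y = 2 ↔ x ≠ y ∧ ¬ G.Adj x y ∧ (G.commonNeighbors x y).Nonempty := by
  rw [← SimpleGraph.edist_eq_two_iff]
  exact ENat.toNat_eq_iff two_ne_zero

/-- Vertices with a common neighbour need not be at distance two, but if they are not, they are
adjacent and hence have distinct labels anyway. -/
theorem isL21Labelling_iff {V : Type*} {G : SimpleGraph V} {k : ℕ} {L : V → ℕ} :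
    IsL21Labelling G k L ↔ (∀ x, L x ≤ k) ∧
      (∀ x y, G.Adj x y → L x + 2 ≤ L y ∨ L y + 2 ≤ L x) ∧
      ∀ z, Set.InjOn L (G.neighborSet z) := by
  have two_le_abs_iff (a b : ℕ) : 2 ≤ |(a : ℤ) - b| ↔ a + 2 ≤ b ∨ b + 2 ≤ a := by
    rw [le_abs]
    omega
  simp only [IsL21Labelling, two_le_abs_iff, dist_eq_two_iff]
  refine and_congr_right fun _ ↦ and_congr_right fun h_adj ↦ ⟨fun h z x hx y hy hxy ↦ ?_, ?_⟩
  · by_contra hne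
    by_cases hadj : G.Adj x y
    · have := h_adj x y hadj
      omega
    · exact h x y ⟨hne, hadj, z, hx.symm, hy.symm⟩ hxy
  · rintro h x y ⟨hne, -, z, hzx, hzy⟩
    exact (h z).ne hzx.symm hzy.symm hne

namespace IsL21Labelling

variable {V W : Type*} {G : SimpleGraph V} {H : SimpleGraph W} {k : ℕ} {L : V → ℕ}

theorem add_two_le_or (hL : IsL21Labelling G k L) {x y : V} (h : G.Adj x y) :
    L x + 2 ≤ L y ∨ L y + 2 ≤ L x :=
  (isL21Labelling_iff.1 hL).2.1 x y h

theorem injOn_neighborSet (hL : IsL21Labelling G k L) (z : V) : Set.InjOn L (G.neighborSet z) :=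
  (isL21Labelling_iff.1 hL).2.2 z

theorem ne_of_adj_of_adj (hL : IsL21Labelling G k L) {z x y : V} (hx : G.Adj z x)
    (hy : G.Adj z y) (hne : x ≠ y) : L x ≠ L y :=
  fun h ↦ hne (hL.injOn_neighborSet z hx hy h)

theorem comp_hom (hL : IsL21Labelling G k L) (φ : H →g G)
    (hφ : ∀ z, Set.InjOn φ (H.neighborSet z)) : IsL21Labelling H k (L ∘ φ) :=
  isL21Labelling_iff.2 ⟨fun _ ↦ hL.1 _, fun _ _ h ↦ hL.add_two_le_or (φ.map_adj h), fun z ↦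
    (hL.injOn_neighborSet (φ z)).comp (hφ z) fun _ h ↦ φ.map_adj h⟩

theorem compl (hL : IsL21Labelling G k L) : IsL21Labelling G k fun x ↦ k - L x := by
  refine isL21Labelling_iff.2 ⟨fun _ ↦ Nat.sub_le _ _, fun x y h ↦ ?_, fun z x hx y hy h ↦ ?_⟩
  · have := hL.add_two_le_or h
    have := hL.1 x
    have := hL.1 y
    omega
  · have := hL.1 x
    have := hL.1 y
    exact hL.injOn_neighborSet z hx hy (by dsimp only at h; omega)

theorem eq_zero_or_eq_of_le_card (hL : IsL21Labelling G k L) {x : V} {s : Finset V}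
    (hs : ↑s ⊆ G.neighborSet x) (hcard : k - 1 ≤ s.card) : L x = 0 ∨ L x = k := by
  by_contra! hx
  have h_le := hL.1 x
  have h_image : s.image L ⊆ Finset.range (k + 1) \ {L x - 1, L x, L x + 1} := by
    intro t ht
    obtain ⟨y, hy, rfl⟩ := Finset.mem_image.1 ht
    have := hL.1 y
    have := hL.add_two_le_or (hs hy)
    simp only [Finset.mem_sdiff, Finset.mem_range, Finset.mem_insert, Finset.mem_singleton]
    omega
  have h_card := Finset.card_le_card h_image
  rw [Finset.card_image_of_injOn ((hL.injOn_neighborSet x).mono hs),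
    Finset.card_sdiff_of_subset (by grind), Finset.card_range] at h_card
  have h_three : ({L x - 1, L x, L x + 1} : Finset ℕ).card = 3 := by grind
  omega

end IsL21Labelling

/-- The graph `H'`. -/
def Hp (k : ℕ) : SimpleGraph (HpV k) := SimpleGraph.fromRel (HpAdj k)

namespace Hp

variable {k : ℕ} {y : HpV k}

@[simp]
theorem adj_c_iff : (Hp k).Adj .c y ↔ y = .d := by
  cases y <;> simp [Hp, HpAdj]

@[simp]
theorem adj_d_iff : (Hp k).Adj .d y ↔ y = .c ∨ y = .e ∨ ∃ j, y = .f j := by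
  cases y <;> simp [Hp, HpAdj]

@[simp]
theorem adj_e_iff : (Hp k).Adj .e y ↔ y = .d := by
  cases y <;> simp [Hp, HpAdj]

@[simp]
theorem adj_f_iff {j : Fin (k - 3)} : (Hp k).Adj (.f j) y ↔ y = .d ∨ y = .g := by
  cases y <;> simp [Hp, HpAdj]

@[simp]
theorem adj_g_iff : (Hp k).Adj .g y ↔ y = .h ∨ y = .i ∨ ∃ j, y = .f j := by
  cases y <;> simp [Hp, HpAdj]

@[simp]
theorem adj_h_iff : (Hp k).Adj .h y ↔ y = .g := by
  cases y <;> simp [Hp, HpAdj]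

@[simp]
theorem adj_i_iff : (Hp k).Adj .i y ↔ y = .g := by
  cases y <;> simp [Hp, HpAdj]

/-- A labelling of `H'` in which `c` gets the label `0`. -/
def labelling (k : ℕ) : HpV k → ℕ
  | .c => 0
  | .d => k
  | .e => 1
  | .f j => j + 2
  | .g => 0
  | .h => k
  | .i => k - 1

theorem isL21Labelling_labelling (hk : 3 ≤ k) : IsL21Labelling (Hp k) k (labelling k) := by
  refine isL21Labelling_iff.2 ⟨fun x ↦ ?_, fun x y h ↦ ?_, fun z x hx y hy h ↦ ?_⟩
  · cases x <;> grind [labelling]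
  · cases x <;>
      simp only [adj_c_iff, adj_d_iff, adj_e_iff, adj_f_iff, adj_g_iff, adj_h_iff, adj_i_iff]
        at h <;>
      grind [labelling]
  · rw [SimpleGraph.mem_neighborSet] at hx hy
    cases z <;>
      simp only [adj_c_iff, adj_d_iff, adj_e_iff, adj_f_iff, adj_g_iff, adj_h_iff, adj_i_iff]
        at hx hy <;>
      grind [labelling]

variable {L : HpV k → ℕ}

theorem label_eq_zero_or_eq_of_adj_f (hL : IsL21Labelling (Hp k) k L) {x y z : HpV k}
    (hxf : ∀ j, (Hp k).Adj x (.f j)) (hxy : (Hp k).Adj x y) (hxz : (Hp k).Adj x z) (hyz : y ≠ z)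
    (hy : ∀ j, HpV.f j ≠ y) (hz : ∀ j, HpV.f j ≠ z) : L x = 0 ∨ L x = k := by
  refine hL.eq_zero_or_eq_of_le_card (s := insert y (insert z (Finset.univ.image HpV.f))) ?_ ?_
  · simp [Set.insert_subset_iff, Set.range_subset_iff, hxf, hxy, hxz]
  · rw [Finset.card_insert_of_notMem (by simp [hyz, hy]),
      Finset.card_insert_of_notMem (by simp [hz]),
      Finset.card_image_of_injective _ fun _ _ ↦ HpV.f.inj, Finset.card_univ, Fintype.card_fin]
    omega

theorem label_f_mem_Icc (hL : IsL21Labelling (Hp k) k L) (j : Fin (k - 3)) :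
    L (.f j) ∈ Set.Icc 2 (k - 2) := by
  have hd := label_eq_zero_or_eq_of_adj_f hL (x := .d) (y := .c) (z := .e)
    (by simp) (by simp) (by simp) (by simp) (by simp) (by simp)
  have hg := label_eq_zero_or_eq_of_adj_f hL (x := .g) (y := .h) (z := .i)
    (by simp) (by simp) (by simp) (by simp) (by simp) (by simp)
  have hdg : L .d ≠ L .g := hL.ne_of_adj_of_adj (z := .f j) (by simp) (by simp) (by simp)
  have hdf := hL.add_two_le_or (x := .d) (y := .f j) (by simp)
  have hgf := hL.add_two_le_or (x := .g) (y := .f j) (by simp)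
  have hf := hL.1 (.f j)
  rw [Set.mem_Icc]
  omega

theorem label_c_notMem_Icc (hL : IsL21Labelling (Hp k) k L) : L .c ∉ Set.Icc 2 (k - 2) := by
  have hf_inj : Function.Injective fun j ↦ L (.f j) := fun i j h ↦
    HpV.f.inj (hL.injOn_neighborSet .d (by simp) (by simp) h)
  have h_image : (Finset.univ.image fun j ↦ L (.f j)) = Finset.Icc 2 (k - 2) := by
    refine Finset.eq_of_subset_of_card_le ?_ ?_
    · exact Finset.image_subset_iff.2 fun j _ ↦ Finset.mem_Icc.2 (label_f_mem_Icc hL j)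
    · rw [Finset.card_image_of_injective _ hf_inj, Finset.card_univ, Fintype.card_fin,
        Nat.card_Icc]
      omega
  rw [← Finset.coe_Icc, Finset.mem_coe, ← h_image, Finset.mem_image]
  rintro ⟨j, -, hj⟩
  exact hL.ne_of_adj_of_adj (z := .d) (x := .f j) (y := .c) (by simp) (by simp) (by simp) hj

end Hp

namespace Gk

variable {k : ℕ} {y : GkV k}

@[simp]
theorem adj_u_iff : (Gk k).Adj .u y ↔ y = .au := by
  cases y <;> simp [Gk, GkAdj]

@[simp]
theorem adj_au_iff : (Gk k).Adj .au y ↔ y = .u ∨ y = .av ∨ ∃ i, y = .b i := by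
  cases y <;> simp [Gk, GkAdj]

@[simp]
theorem adj_av_iff : (Gk k).Adj .av y ↔ y = .v ∨ y = .au ∨ ∃ i, y = .b i := by
  cases y <;> simp [Gk, GkAdj]

@[simp]
theorem adj_v_iff : (Gk k).Adj .v y ↔ y = .av := by
  cases y <;> simp [Gk, GkAdj]

@[simp]
theorem adj_b_iff {i : Fin (k - 5)} :
    (Gk k).Adj (.b i) y ↔ y = .au ∨ y = .av ∨ ∃ s, y = .hp i s .c := by
  cases y <;> simp [Gk, GkAdj]

@[simp]
theorem adj_hp_iff {i : Fin (k - 5)} {s : Bool} {x : HpV k} :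
    (Gk k).Adj (.hp i s x) y ↔
      (x = .c ∧ y = .b i) ∨ ∃ x', (Hp k).Adj x x' ∧ y = .hp i s x' := by
  cases y <;> grind [Gk, GkAdj, Hp, SimpleGraph.fromRel_adj]

/-- The inclusion of the `s`-th copy of `H'` attached to `bᵢ`. -/
def copyHom (i : Fin (k - 5)) (s : Bool) : Hp k →g Gk k where
  toFun := .hp i s
  map_rel' h := by simpa using h

/-- The labelling of `G_k` with labels `1` and `k - 1` at `a_u` and `a_v`. The neighbours named `c`
of each `bᵢ` are labelled `0` and `k`, so the two copies of `H'` carry complementary labellings. -/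
def labelling (k : ℕ) : GkV k → ℕ
  | .u => k
  | .au => 1
  | .av => k - 1
  | .v => 0
  | .b i => i + 3
  | .hp _ false x => Hp.labelling k x
  | .hp _ true x => k - Hp.labelling k x

theorem isL21Labelling_labelling_copy (hk : 3 ≤ k) (i : Fin (k - 5)) (s : Bool) :
    IsL21Labelling (Hp k) k fun x ↦ labelling k (.hp i s x) := by
  cases s
  · exact Hp.isL21Labelling_labelling hk
  · exact (Hp.isL21Labelling_labelling hk).compl

theorem labelling_hp_c (i : Fin (k - 5)) (s : Bool) :
    labelling k (.hp i s .c) = if s then k else 0 := by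
  cases s <;> simp [labelling, Hp.labelling]

theorem labelling_hp_d (i : Fin (k - 5)) (s : Bool) :
    labelling k (.hp i s .d) = if s then 0 else k := by
  cases s <;> simp [labelling, Hp.labelling]

theorem labelling_add_two_le_or (hk : 4 ≤ k) {x y : GkV k} (h : (Gk k).Adj x y) :
    labelling k x + 2 ≤ labelling k y ∨ labelling k y + 2 ≤ labelling k x := by
  cases x with
  | hp i s x =>
    rw [adj_hp_iff] at h
    obtain ⟨rfl, rfl⟩ | ⟨x', hadj, rfl⟩ := h
    · grind [labelling, labelling_hp_c]
    · exact (isL21Labelling_labelling_copy (by omega) i s).add_two_le_or hadj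
  | _ =>
    simp only [adj_u_iff, adj_au_iff, adj_av_iff, adj_v_iff, adj_b_iff] at h
    grind [labelling, labelling_hp_c]

theorem injOn_labelling_neighborSet (hk : 4 ≤ k) (z : GkV k) :
    Set.InjOn (labelling k) ((Gk k).neighborSet z) := by
  intro x hx y hy hxy
  rw [SimpleGraph.mem_neighborSet] at hx hy
  cases z with
  | hp i s z =>
    have h_copy := (isL21Labelling_labelling_copy (by omega) i s).injOn_neighborSet z
    have h_ne (w : HpV k) (hw : (Hp k).Adj .c w) :
        labelling k (.b i) ≠ labelling k (.hp i s w) := by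
      rw [Hp.adj_c_iff] at hw
      grind [labelling, labelling_hp_d]
    rw [adj_hp_iff] at hx hy
    obtain ⟨rfl, rfl⟩ | ⟨x', hx', rfl⟩ := hx <;> obtain ⟨hz, rfl⟩ | ⟨y', hy', rfl⟩ := hy
    · rfl
    · exact absurd hxy (h_ne _ hy')
    · subst hz
      exact absurd hxy.symm (h_ne _ hx')
    · rw [h_copy hx' hy' hxy]
  | _ =>
    simp only [adj_u_iff, adj_au_iff, adj_av_iff, adj_v_iff, adj_b_iff] at hx hy
    grind [labelling, labelling_hp_c]

theorem isL21Labelling_labelling (hk : 4 ≤ k) : IsL21Labelling (Gk k) k (labelling k) := by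
  refine isL21Labelling_iff.2 ⟨fun x ↦ ?_, fun _ _ ↦ labelling_add_two_le_or hk,
    injOn_labelling_neighborSet hk⟩
  cases x with
  | hp i s x => exact (isL21Labelling_labelling_copy (by omega) i s).1 x
  | _ => simp only [labelling]; omega

variable {L : GkV k → ℕ}

theorem label_c_notMem_Icc (hL : IsL21Labelling (Gk k) k L) (i : Fin (k - 5)) (s : Bool) :
    L (.hp i s .c) ∉ Set.Icc 2 (k - 2) :=
  Hp.label_c_notMem_Icc <| hL.comp_hom (copyHom i s) fun _ _ _ _ _ h ↦ by cases h; rfl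

theorem label_au_mem_Icc (hL : IsL21Labelling (Gk k) k L) (hu : L .u = k) (hv : L .v = 0) :
    L .au ∈ Set.Icc 1 (k - 2) := by
  have h_ne : L .au ≠ L .v := hL.ne_of_adj_of_adj (z := .av) (by simp) (by simp) (by simp)
  have := hL.add_two_le_or (x := .au) (y := .u) (by simp)
  have := hL.1 .au
  rw [Set.mem_Icc]
  omega

theorem label_av_mem_Icc (hL : IsL21Labelling (Gk k) k L) (hu : L .u = k) (hv : L .v = 0) :
    L .av ∈ Set.Icc 2 (k - 1) := by
  have h_ne : L .av ≠ L .u := hL.ne_of_adj_of_adj (z := .au) (by simp) (by simp) (by simp)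
  have := hL.add_two_le_or (x := .av) (y := .v) (by simp)
  have := hL.1 .av
  rw [Set.mem_Icc]
  omega

theorem label_b_mem_Icc (hL : IsL21Labelling (Gk k) k L) (hu : L .u = k) (hv : L .v = 0)
    (i : Fin (k - 5)) : L (.b i) ∈ Set.Icc 1 (k - 1) := by
  have hbu : L (.b i) ≠ L .u := hL.ne_of_adj_of_adj (z := .au) (by simp) (by simp) (by simp)
  have hbv : L (.b i) ≠ L .v := hL.ne_of_adj_of_adj (z := .av) (by simp) (by simp) (by simp)
  have := hL.1 (.b i)
  rw [Set.mem_Icc]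
  omega

theorem label_b_notMem_arc (hL : IsL21Labelling (Gk k) k L) {a : GkV k} {i : Fin (k - 5)}
    (hb : L (.b i) ∈ Set.Icc 1 (k - 1)) (ha : L a ∈ Set.Icc 1 (k - 1)) (hba : (Gk k).Adj (.b i) a)
    (hac : ∀ s, GkV.hp i s .c ≠ a) : (L (.b i) : ZMod (k - 1)) ∉ arc (L a : ZMod (k - 1)) := by
  rw [natCast_mem_arc_natCast_iff hb ha]
  have h_adj := hL.add_two_le_or hba
  have hc_ne : L (.hp i false .c) ≠ L (.hp i true .c) :=
    hL.ne_of_adj_of_adj (z := .b i) (by simp) (by simp) (by simp)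
  have hc (s : Bool) : L (.hp i s .c) ≤ k ∧ ¬ (2 ≤ L (.hp i s .c) ∧ L (.hp i s .c) ≤ k - 2) ∧
      (L (.b i) + 2 ≤ L (.hp i s .c) ∨ L (.hp i s .c) + 2 ≤ L (.b i)) ∧
      L (.hp i s .c) ≠ L a :=
    ⟨hL.1 _, label_c_notMem_Icc hL i s, hL.add_two_le_or (by simp),
      hL.ne_of_adj_of_adj (z := .b i) (by simp) hba (hac s)⟩
  -- A label `1` or `k - 1` of `bᵢ` leaves only two labels for its two `c`, and `a` must avoid both.
  have hc_false := hc false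
  have hc_true := hc true
  rw [Set.mem_Icc] at ha hb
  omega

theorem injective_natCast_label_b (hL : IsL21Labelling (Gk k) k L) (hu : L .u = k)
    (hv : L .v = 0) : Function.Injective fun i ↦ (L (.b i) : ZMod (k - 1)) := fun i j h ↦
  GkV.b.inj <| hL.injOn_neighborSet .au (by simp) (by simp) <|
    injOn_natCast_zmod_Icc _ (label_b_mem_Icc hL hu hv i) (label_b_mem_Icc hL hu hv j) h

theorem label_av_mem_arc (hk : 6 ≤ k) (hL : IsL21Labelling (Gk k) k L) (hu : L .u = k)
    (hv : L .v = 0) : (L .av : ZMod (k - 1)) ∈ arc (L .au : ZMod (k - 1)) := by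
  by_contra h_notMem
  have hau : L .au ∈ Set.Icc 1 (k - 1) :=
    Set.Icc_subset_Icc_right (by omega) (label_au_mem_Icc hL hu hv)
  have hav : L .av ∈ Set.Icc 1 (k - 1) :=
    Set.Icc_subset_Icc_left one_le_two (label_av_mem_Icc hL hu hv)
  have hb := label_b_mem_Icc hL hu hv
  have : NeZero (k - 1) := ⟨by omega⟩
  have hb_image : (Finset.univ.image fun i ↦ (L (.b i) : ZMod (k - 1))) ⊆
      (arc (L .au : ZMod (k - 1)) ∪ arc (L .av : ZMod (k - 1)))ᶜ := by
    refine Finset.image_subset_iff.2 fun i _ ↦ ?_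
    rw [Finset.mem_compl, Finset.mem_union, not_or]
    exact ⟨label_b_notMem_arc hL (hb i) hau (by simp) (by simp),
      label_b_notMem_arc hL (hb i) hav (by simp) (by simp)⟩
  have h_card := Finset.card_le_card hb_image
  rw [Finset.card_image_of_injective _ (injective_natCast_label_b hL hu hv), Finset.card_univ,
    Fintype.card_fin, Finset.card_compl, ZMod.card] at h_card
  have h_arcs := five_le_card_union_arc (four_ne_zero_zmod (by omega)) h_notMem
  omega

theorem label_au_eq_and_label_av_eq (hk : 6 ≤ k) (hL : IsL21Labelling (Gk k) k L) (hu : L .u = k)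
    (hv : L .v = 0) : L .au = 1 ∧ L .av = k - 1 := by
  have h_arc := label_av_mem_arc hk hL hu hv
  have hau := label_au_mem_Icc hL hu hv
  have hav := label_av_mem_Icc hL hu hv
  rw [natCast_mem_arc_natCast_iff (Set.Icc_subset_Icc_left one_le_two hav)
    (Set.Icc_subset_Icc_right (by omega) hau)] at h_arc
  have := hL.add_two_le_or (x := .au) (y := .av) (by simp)
  rw [Set.mem_Icc] at hau hav
  omega

end Gk

/-- For `k ≥ 6` and `α, β ∈ {0,…,k}`: there is a `k`-L(2,1)-labelling `L` of `G_k` with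
`L u = k`, `L v = 0`, `L a_u = α`, `L a_v = β` iff `(α,β) = (1, k-1)`. -/
theorem stmt_12 (k : ℕ) (hk : 6 ≤ k) (α β : ℕ) (hα : α ≤ k) (hβ : β ≤ k) :
    (∃ L : GkV k → ℕ, IsL21Labelling (Gk k) k L ∧
      L GkV.u = k ∧ L GkV.v = 0 ∧ L GkV.au = α ∧ L GkV.av = β) ↔
    (α, β) = (1, k - 1) := by
  rw [Prod.mk.injEq]
  constructor
  · rintro ⟨L, hL, hu, hv, rfl, rfl⟩
    exact Gk.label_au_eq_and_label_av_eq hk hL hu hv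
  · rintro ⟨rfl, rfl⟩
    exact ⟨Gk.labelling k, Gk.isL21Labelling_labelling (by omega), rfl, rfl, rfl, rfl⟩
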